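/- Let a, a', b > 0. If X ~ μ_{a,a',b} and W ~ β²_{b,a'} are independent real random variables, then 1/(1 + X·W) has distribution μ_{a',a,b}. -/

import Mathlib

open MeasureTheory ProbabilityTheory Real Set Filter Topology

noncomputable def gammaDens (p σ y : ℝ) : ℝ :=
  if 0 < y then σ ^ p / Real.Gamma p * Real.exp (-(σ * y)) * y ^ (p - 1) else 0

noncomputable def gammaM (p σ : ℝ) : Measure ℝ :=
  MeasureTheory.volume.withDensity fun y => ENNReal.ofReal (gammaDens p σ y)

noncomputable def beta1Dens (p q x : ℝ) : ℝ :=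
  if 0 < x ∧ x < 1 then
    Real.Gamma (p + q) / (Real.Gamma p * Real.Gamma q) * x ^ (p - 1) * (1 - x) ^ (q - 1)
  else 0

noncomputable def beta1 (p q : ℝ) : Measure ℝ :=
  MeasureTheory.volume.withDensity fun x => ENNReal.ofReal (beta1Dens p q x)

noncomputable def beta2Dens (p q y : ℝ) : ℝ :=
  if 0 < y then
    Real.Gamma (p + q) / (Real.Gamma p * Real.Gamma q) * y ^ (p - 1) * (1 + y) ^ (-(p + q))
  else 0

noncomputable def beta2 (p q : ℝ) : Measure ℝ :=
  MeasureTheory.volume.withDensity fun y => ENNReal.ofReal (beta2Dens p q y)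

/-- Pochhammer (rising factorial) symbol `(a)_n`. -/
noncomputable def poch (a : ℝ) (n : ℕ) : ℝ := ∏ i ∈ Finset.range n, (a + (i : ℝ))

/-- Gauss hypergeometric function `₂F₁(a,b;c;x)`. -/
noncomputable def F21 (a b c x : ℝ) : ℝ :=
  ∑' n : ℕ, poch a n * poch b n / ((n.factorial : ℝ) * poch c n) * x ^ n

/-- Generalized hypergeometric `₃F₂(a₁,a₂,a₃;b₁,b₂;1)` at unit argument. -/
noncomputable def F32one (a1 a2 a3 b1 b2 : ℝ) : ℝ :=
  ∑' n : ℕ, poch a1 n * poch a2 n * poch a3 n /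
    ((n.factorial : ℝ) * poch b1 n * poch b2 n)

/-- Normalizing constant of the real beta-hypergeometric distribution. -/
noncomputable def Cbh (a a' b : ℝ) : ℝ :=
  Real.Gamma (a + b) / (Real.Gamma a * Real.Gamma b * F32one a a b (a + b) (a + a'))

noncomputable def bhDens (a a' b x : ℝ) : ℝ :=
  if 0 < x ∧ x < 1 then
    Cbh a a' b * x ^ (a - 1) * (1 - x) ^ (b - 1) * F21 a b (a + a') x
  else 0

/-- The real beta-hypergeometric distribution `μ_{a,a',b}`. -/
noncomputable def bhMeasure (a a' b : ℝ) : Measure ℝ :=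
  MeasureTheory.volume.withDensity fun x => ENNReal.ofReal (bhDens a a' b x)


lemma poch_succ (s : ℝ) (n : ℕ) : poch s (n + 1) = poch s n * (s + n) := by
  simp [poch, Finset.prod_range_succ]

lemma poch_pos {s : ℝ} (hs : 0 < s) (n : ℕ) : 0 < poch s n :=
  Finset.prod_pos fun i _ => by positivity

lemma Gamma_add_nat {s : ℝ} (hs : 0 < s) (n : ℕ) :
    Real.Gamma (s + n) = poch s n * Real.Gamma s := by
  induction n with
  | zero => simp [poch]
  | succ n ih =>
    rw [poch_succ, Nat.cast_succ, ← add_assoc, Real.Gamma_add_one (by positivity), ih]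
    ring

lemma choose_eq_poch (s : ℝ) (n : ℕ) : Ring.choose (s + n - 1) n = poch s n / n.factorial := by
  have h : Ring.choose (s + n - 1) n = Ring.multichoose s n := by
    rw [Ring.choose]; congr 1; ring
  have h2 := Ring.factorial_nsmul_multichoose_eq_ascPochhammer s n
  have h3 : (ascPochhammer ℕ n).smeval s = poch s n := by
    rw [Polynomial.ascPochhammer_smeval_eq_eval]
    induction n with
    | zero => simp [poch]
    | succ n ih =>
      rw [poch_succ, ascPochhammer_succ_eval, ih]
      · rw [Ring.choose]; congr 1; ring
      · exact Ring.factorial_nsmul_multichoose_eq_ascPochhammer s n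
  rw [h, eq_div_iff (by positivity), ← h3, ← h2]
  simp [mul_comm]

lemma binom_hasSum (s : ℝ) {t : ℝ} (h0 : 0 ≤ t) (h1 : t < 1) :
    HasSum (fun n : ℕ => poch s n / n.factorial * t ^ n) ((1 - t) ^ (-s)) := by
  have h := (Real.one_div_one_sub_rpow_hasFPowerSeriesOnBall_zero s).hasSum (y := t)
    (by simp [abs_of_nonneg h0, enorm_eq_nnnorm, ← NNReal.coe_lt_coe, h1])
  simp only [FormalMultilinearSeries.ofScalars_apply_eq, choose_eq_poch, zero_add,
    smul_eq_mul] at h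
  rw [Real.rpow_neg (by linarith), ← one_div]
  exact h

lemma beta_lintegral {p q : ℝ} (hp : 0 < p) (hq : 0 < q) :
    ∫⁻ x in Ioo (0:ℝ) 1, ENNReal.ofReal (x ^ (p - 1) * (1 - x) ^ (q - 1)) =
      ENNReal.ofReal (Real.Gamma p * Real.Gamma q / Real.Gamma (p + q)) := by
  have h := lintegral_betaPDF_eq_one hp hq
  have hB := beta_pos hp hq
  rw [lintegral_betaPDF] at h
  simp_rw [mul_assoc, ENNReal.ofReal_mul (one_div_pos.2 hB).le] at h
  rw [lintegral_const_mul _ (by fun_prop), mul_comm] at h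
  have := ENNReal.eq_inv_of_mul_eq_one_left h
  rw [this, ← ENNReal.ofReal_inv_of_pos (one_div_pos.2 hB), one_div, inv_inv]
  rfl

/-- integrate a positive series term by term against beta weights -/
lemma series_beta {p q : ℝ} (hp : 0 < p) (hq : 0 < q) (c : ℕ → ℝ) (hc : ∀ n, 0 ≤ c n)
    (f : ℝ → ℝ) (hf : ∀ x ∈ Ioo (0:ℝ) 1, HasSum (fun n => c n * x ^ n) (f x)) :
    ∫⁻ x in Ioo (0:ℝ) 1, ENNReal.ofReal (x ^ (p - 1) * (1 - x) ^ (q - 1) * f x) =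
      ∑' n : ℕ, ENNReal.ofReal
        (c n * (Real.Gamma (p + n) * Real.Gamma q / Real.Gamma (p + n + q))) := by
  have h1 : ∀ x ∈ Ioo (0:ℝ) 1, ENNReal.ofReal (x ^ (p - 1) * (1 - x) ^ (q - 1) * f x) =
      ∑' n : ℕ, ENNReal.ofReal (c n) * ENNReal.ofReal (x ^ (p + n - 1) * (1 - x) ^ (q - 1)) := by
    intro x hx
    have hx0 : 0 < x := hx.1
    have hx1 : 0 < 1 - x := by linarith [hx.2]
    have hs := (hf x hx).mul_left (x ^ (p - 1) * (1 - x) ^ (q - 1))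
    rw [← hs.tsum_eq, ENNReal.ofReal_tsum_of_nonneg _ hs.summable]
    · congr 1 with n
      rw [← ENNReal.ofReal_mul (hc n)]
      congr 1
      rw [show p + n - 1 = (p - 1) + n by ring, Real.rpow_add hx0, Real.rpow_natCast]
      ring
    · intro n
      have := hc n
      positivity
  rw [setLIntegral_congr_fun measurableSet_Ioo h1, lintegral_tsum (fun n => by fun_prop)]
  congr 1 with n
  rw [lintegral_const_mul _ (by fun_prop), beta_lintegral (by positivity) hq,
    ← ENNReal.ofReal_mul (hc n)]

lemma gauss {a b q : ℝ} (ha : 0 < a) (hb : 0 < b) (hq : a < q) :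
    ∑' n : ℕ, ENNReal.ofReal
        (poch a n / n.factorial * (Real.Gamma (b + n) * Real.Gamma q / Real.Gamma (b + n + q))) =
      ENNReal.ofReal (Real.Gamma b * Real.Gamma (q - a) / Real.Gamma (b + (q - a))) := by
  rw [← series_beta hb (by linarith) (fun n => poch a n / n.factorial)
    (fun n => by have := poch_pos ha n; positivity) (fun x => (1 - x) ^ (-a))
    (fun x hx => binom_hasSum a hx.1.le hx.2), ← beta_lintegral hb (by linarith)]
  refine setLIntegral_congr_fun measurableSet_Ioo fun x hx => ?_
  have hx1 : 0 < 1 - x := by linarith [hx.2]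
  rw [mul_assoc, ← Real.rpow_add hx1]
  ring_nf

lemma F21_hasSum {a b c x : ℝ} (ha : 0 < a) (hb : 0 < b) (hc : 0 < c) (h0 : 0 < x) (h1 : x < 1) :
    HasSum (fun n : ℕ => poch a n * poch b n / ((n.factorial : ℝ) * poch c n) * x ^ n)
      (F21 a b c x) := by
  refine Summable.hasSum ?_
  have hpos : ∀ n : ℕ, 0 < poch a n * poch b n / ((n.factorial : ℝ) * poch c n) * x ^ n := by
    intro n
    have := poch_pos ha n
    have := poch_pos hb n
    have := poch_pos hc n
    positivity
  refine summable_of_ratio_test_tendsto_lt_one h1 (Eventually.of_forall fun n => (hpos n).ne') ?_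
  have key : ∀ u v : ℝ, Tendsto (fun n : ℕ => (u + n) / (v + n)) atTop (𝓝 1) := by
    intro u v
    have h := tendsto_add_mul_div_add_mul_atTop_nhds u v 1 (d := (1:ℝ)) one_ne_zero
    simpa using h
  have h2 := ((key a 1).mul (key b c)).mul_const x
  simp only [one_mul] at h2
  refine h2.congr fun n => ?_
  rw [Real.norm_of_nonneg (hpos _).le, Real.norm_of_nonneg (hpos _).le, poch_succ, poch_succ,
    poch_succ, Nat.factorial_succ, pow_succ]
  have := poch_pos ha n
  have := poch_pos hb n
  have := poch_pos hc n
  push_cast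
  field_simp
  ring

lemma F21_nonneg {a b c x : ℝ} (ha : 0 < a) (hb : 0 < b) (hc : 0 < c) (h0 : 0 < x) :
    0 ≤ F21 a b c x := by
  refine tsum_nonneg fun n => ?_
  have := poch_pos ha n
  have := poch_pos hb n
  have := poch_pos hc n
  positivity

@[fun_prop]
lemma F21_measurable (a b c : ℝ) : Measurable (F21 a b c) := by
  unfold F21
  fun_prop

lemma L5 {a a' b : ℝ} (ha : 0 < a) (ha' : 0 < a') (hb : 0 < b) (m : ℕ) :
    ∫⁻ x in Ioo (0:ℝ) 1, ENNReal.ofReal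
      (x ^ (a + a' - 1) * (1 - x) ^ (b + m - 1) * F21 a b (a + a') x) =
    ENNReal.ofReal (Real.Gamma (a + a') * Real.Gamma (b + m) * Real.Gamma (a' + m) /
      (Real.Gamma (a' + b + m) * Real.Gamma (a + a' + m))) := by
  have hc : 0 < a + a' := by positivity
  have hGc := Real.Gamma_pos_of_pos hc
  have hGb := Real.Gamma_pos_of_pos hb
  have hGbm := Real.Gamma_pos_of_pos (show 0 < b + m by positivity)
  have hGcm := Real.Gamma_pos_of_pos (show 0 < a + a' + m by positivity)
  rw [series_beta hc (by positivity) _ (fun n => by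
    have := poch_pos ha n
    have := poch_pos hb n
    have := poch_pos hc n
    positivity) _ (fun x hx => F21_hasSum ha hb hc hx.1 hx.2)]
  have hg := gauss ha hb (show a < a + a' + m by have : (0:ℝ) ≤ m := m.cast_nonneg; linarith)
  have hK : 0 ≤ Real.Gamma (a + a') * Real.Gamma (b + m) /
    (Real.Gamma b * Real.Gamma (a + a' + m)) := by positivity
  trans ∑' n : ℕ, ENNReal.ofReal (Real.Gamma (a + a') * Real.Gamma (b + m) /
    (Real.Gamma b * Real.Gamma (a + a' + m))) * ENNReal.ofReal
        (poch a n / n.factorial * (Real.Gamma (b + n) * Real.Gamma (a + a' + m) /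
          Real.Gamma (b + n + (a + a' + m))))
  · congr 1 with n
    rw [← ENNReal.ofReal_mul hK]
    congr 1
    rw [Gamma_add_nat hc, Gamma_add_nat hb n,
      show a + a' + n + (b + m) = b + n + (a + a' + m) by ring]
    have := poch_pos hc n
    have := Real.Gamma_pos_of_pos (show 0 < b + n + (a + a' + m) by positivity)
    field_simp
  · rw [ENNReal.tsum_mul_left, hg, ← ENNReal.ofReal_mul hK]
    congr 1
    rw [show a + a' + m - a = a' + m by ring, show b + (a' + m) = a' + b + m by ring]
    field_simp

lemma L6 {a a' b v : ℝ} (ha : 0 < a) (ha' : 0 < a') (hb : 0 < b) (h0 : 0 < v) (h1 : v < 1) :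
    ∫⁻ x in Ioo (0:ℝ) 1, ENNReal.ofReal
      (x ^ (a + a' - 1) * (1 - x) ^ (b - 1) * F21 a b (a + a') x *
        (1 - v * (1 - x)) ^ (-(a' + b))) =
    ENNReal.ofReal (Real.Gamma b * Real.Gamma a' / Real.Gamma (a' + b) *
      F21 a' b (a + a') v) := by
  have hc : 0 < a + a' := by positivity
  have hd : 0 < a' + b := by positivity
  have e : ∀ x ∈ Ioo (0:ℝ) 1, ENNReal.ofReal
      (x ^ (a + a' - 1) * (1 - x) ^ (b - 1) * F21 a b (a + a') x *
        (1 - v * (1 - x)) ^ (-(a' + b))) = ∑' m : ℕ,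
      ENNReal.ofReal (poch (a' + b) m / m.factorial * v ^ m) * ENNReal.ofReal
      (x ^ (a + a' - 1) * (1 - x) ^ (b + m - 1) * F21 a b (a + a') x) := by
    intro x hx
    have hx0 : 0 < x := hx.1
    have hx1 : 0 < 1 - x := by linarith [hx.2]
    have hF := F21_nonneg ha hb hc hx0
    have hs := (binom_hasSum (a' + b) (t := v * (1 - x)) (by positivity)
      (by nlinarith)).mul_left (x ^ (a + a' - 1) * (1 - x) ^ (b - 1) * F21 a b (a + a') x)
    rw [← hs.tsum_eq, ENNReal.ofReal_tsum_of_nonneg _ hs.summable]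
    · congr 1 with m
      have := poch_pos hd m
      rw [← ENNReal.ofReal_mul (by positivity)]
      congr 1
      rw [show b + m - 1 = (b - 1) + m by ring, Real.rpow_add hx1, Real.rpow_natCast, mul_pow]
      ring
    · intro n
      have := poch_pos hd n
      positivity
  rw [setLIntegral_congr_fun measurableSet_Ioo e, lintegral_tsum (fun n => by fun_prop)]
  have hs := (F21_hasSum ha' hb hc h0 h1).mul_left
    (Real.Gamma b * Real.Gamma a' / Real.Gamma (a' + b))
  have g1 := Real.Gamma_pos_of_pos hb
  have g2 := Real.Gamma_pos_of_pos ha'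
  have g3 := Real.Gamma_pos_of_pos hd
  have g4 := Real.Gamma_pos_of_pos hc
  rw [← hs.tsum_eq, ENNReal.ofReal_tsum_of_nonneg _ hs.summable]
  · congr 1 with m
    have p1 := poch_pos hd m
    have p2 := poch_pos hb m
    have p3 := poch_pos ha' m
    have p4 := poch_pos hc m
    rw [lintegral_const_mul _ (by fun_prop), L5 ha ha' hb, ← ENNReal.ofReal_mul (by positivity)]
    congr 1
    rw [Gamma_add_nat hb, Gamma_add_nat ha', Gamma_add_nat hd, Gamma_add_nat hc]
    field_simp
  · intro m
    have p2 := poch_pos hb m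
    have p3 := poch_pos ha' m
    have p4 := poch_pos hc m
    positivity

lemma L7 {a a' b : ℝ} (ha : 0 < a) (ha' : 0 < a') (hb : 0 < b)
    (hfin : ∫⁻ x in Ioo (0:ℝ) 1, ENNReal.ofReal
      (x ^ (a - 1) * (1 - x) ^ (b - 1) * F21 a b (a + a') x) ≠ ⊤) :
    ENNReal.ofReal (Cbh a a' b) * ∫⁻ x in Ioo (0:ℝ) 1, ENNReal.ofReal
      (x ^ (a - 1) * (1 - x) ^ (b - 1) * F21 a b (a + a') x) = 1 := by
  have hc : 0 < a + a' := by positivity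
  have hd : 0 < a + b := by positivity
  have g1 := Real.Gamma_pos_of_pos hb
  have g2 := Real.Gamma_pos_of_pos ha
  have g3 := Real.Gamma_pos_of_pos hd
  have hpos : ∀ n : ℕ, 0 < poch a n * poch a n * poch b n /
    ((n.factorial : ℝ) * poch (a + b) n * poch (a + a') n) := by
    intro n
    have p1 := poch_pos hd n
    have p2 := poch_pos hb n
    have p3 := poch_pos ha n
    have p4 := poch_pos hc n
    positivity
  have hK : 0 < Real.Gamma a * Real.Gamma b / Real.Gamma (a + b) := by positivity
  have e : ∫⁻ x in Ioo (0:ℝ) 1, ENNReal.ofReal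
      (x ^ (a - 1) * (1 - x) ^ (b - 1) * F21 a b (a + a') x) =
      ENNReal.ofReal (Real.Gamma a * Real.Gamma b / Real.Gamma (a + b)) *
      ∑' n : ℕ, ENNReal.ofReal (poch a n * poch a n * poch b n /
        ((n.factorial : ℝ) * poch (a + b) n * poch (a + a') n)) := by
    rw [series_beta ha hb _ (fun n => by
      have := poch_pos ha n
      have := poch_pos hb n
      have := poch_pos hc n
      positivity) _ (fun x hx => F21_hasSum ha hb hc hx.1 hx.2), ← ENNReal.tsum_mul_left]
    congr 1 with n
    rw [← ENNReal.ofReal_mul hK.le]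
    congr 1
    have p1 := poch_pos hd n
    have p4 := poch_pos hc n
    rw [show a + n + b = a + b + n by ring, Gamma_add_nat ha, Gamma_add_nat hd]
    field_simp
  have hne : ∑' n : ℕ, ENNReal.ofReal (poch a n * poch a n * poch b n /
        ((n.factorial : ℝ) * poch (a + b) n * poch (a + a') n)) ≠ ⊤ := by
    intro h
    rw [e, h, ENNReal.mul_top (by simpa using hK)] at hfin
    exact hfin rfl
  have hsum : Summable (fun n : ℕ => poch a n * poch a n * poch b n /
        ((n.factorial : ℝ) * poch (a + b) n * poch (a + a') n)) := by
    have := ENNReal.summable_toReal hne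
    exact this.congr fun n => ENNReal.toReal_ofReal (hpos n).le
  have hF : 0 < F32one a a b (a + b) (a + a') := hsum.tsum_pos (fun n => (hpos n).le) 0 (hpos 0)
  rw [e, ← ENNReal.ofReal_tsum_of_nonneg (fun n => (hpos n).le) hsum]
  change _ * (_ * ENNReal.ofReal (F32one a a b (a + b) (a + a'))) = 1
  rw [Cbh, ← ENNReal.ofReal_mul hK.le, ← ENNReal.ofReal_mul (by positivity), ← ENNReal.ofReal_one]
  congr 1
  field_simp

@[fun_prop]
lemma bhDens_measurable (a a' b : ℝ) : Measurable (bhDens a a' b) := by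
  unfold bhDens
  exact Measurable.ite measurableSet_Ioo (by fun_prop) (by fun_prop)

@[fun_prop]
lemma beta2Dens_measurable (p q : ℝ) : Measurable (beta2Dens p q) := by
  unfold beta2Dens
  exact Measurable.ite measurableSet_Ioi (by fun_prop) (by fun_prop)

lemma lintegral_bh (a a' b : ℝ) (f : ℝ → ENNReal) (hf : Measurable f) :
    ∫⁻ x, f x ∂(bhMeasure a a' b) = ∫⁻ x in Ioo (0:ℝ) 1, ENNReal.ofReal
      (Cbh a a' b * x ^ (a - 1) * (1 - x) ^ (b - 1) * F21 a b (a + a') x) * f x := by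
  rw [bhMeasure, lintegral_withDensity_eq_lintegral_mul _ (by fun_prop) hf,
    ← lintegral_indicator measurableSet_Ioo]
  congr 1 with x
  by_cases hx : x ∈ Ioo (0:ℝ) 1
  · rw [indicator_of_mem hx, Pi.mul_apply, bhDens, if_pos (by simpa using hx)]
  · rw [indicator_of_notMem hx, Pi.mul_apply, bhDens, if_neg (by simpa using hx)]
    simp

lemma lintegral_beta2 (p q : ℝ) (f : ℝ → ENNReal) (hf : Measurable f) :
    ∫⁻ x, f x ∂(beta2 p q) = ∫⁻ y in Ioi (0:ℝ), ENNReal.ofReal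
      (Real.Gamma (p + q) / (Real.Gamma p * Real.Gamma q) * y ^ (p - 1) * (1 + y) ^ (-(p + q)))
        * f y := by
  rw [beta2, lintegral_withDensity_eq_lintegral_mul _ (by fun_prop) hf,
    ← lintegral_indicator measurableSet_Ioi]
  congr 1 with x
  by_cases hx : x ∈ Ioi (0:ℝ)
  · rw [indicator_of_mem hx, Pi.mul_apply, beta2Dens, if_pos (by simpa using hx)]
  · rw [indicator_of_notMem hx, Pi.mul_apply, beta2Dens, if_neg (by simpa using hx)]
    simp

lemma inner_change {a' b x : ℝ} (hx : 0 < x) (ha' : 0 < a') (hb : 0 < b) (f : ℝ → ENNReal)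
    (hf : Measurable f) :
    ∫⁻ w, f (1 / (1 + x * w)) ∂(beta2 b a') = ∫⁻ v in Ioo (0:ℝ) 1, f v * ENNReal.ofReal
      (Real.Gamma (b + a') / (Real.Gamma b * Real.Gamma a') * (1 - v) ^ (b - 1) * v ^ (a' - 1)
        * x ^ a' * (1 - v * (1 - x)) ^ (-(a' + b))) := by
  rw [lintegral_beta2 _ _ _ (by fun_prop)]
  have himg : (fun v : ℝ => (1 - v) / (v * x)) '' Ioo (0:ℝ) 1 = Ioi 0 := by
    ext w
    constructor
    · rintro ⟨v, ⟨hv0, hv1⟩, rfl⟩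
      have : 0 < 1 - v := by linarith
      simp only [mem_Ioi]
      positivity
    · intro hw
      have hw : 0 < w := hw
      have h1 : 0 < 1 + x * w := by positivity
      refine ⟨1 / (1 + x * w), ⟨by positivity, ?_⟩, ?_⟩
      · rw [div_lt_one h1]
        nlinarith [mul_pos hx hw]
      · simp only
        field_simp
        ring
  rw [← himg, lintegral_image_eq_lintegral_abs_deriv_mul measurableSet_Ioo
    (f' := fun v => -(1 / (v ^ 2 * x)))]
  · refine setLIntegral_congr_fun measurableSet_Ioo fun v hv => ?_
    obtain ⟨hv0, hv1⟩ := hv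
    have h1v : 0 < 1 - v := by linarith
    have hD : 0 < 1 - v * (1 - x) := by nlinarith [mul_pos hv0 hx]
    have e1 : 1 / (1 + x * ((1 - v) / (v * x))) = v := by
      field_simp
      ring
    have e2 : 1 + (1 - v) / (v * x) = (1 - v * (1 - x)) / (v * x) := by
      field_simp
      ring
    rw [e1, e2, abs_neg, abs_of_pos (by positivity), ← mul_assoc,
      ← ENNReal.ofReal_mul (by positivity), mul_comm (f v)]
    congr 2
    rw [Real.div_rpow h1v.le (by positivity), Real.div_rpow hD.le (by positivity),
      Real.mul_rpow hv0.le hx.le, Real.mul_rpow hv0.le hx.le, add_comm b a',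
      Real.rpow_neg hv0.le, Real.rpow_neg hx.le, Real.rpow_add hv0, Real.rpow_add hx,
      Real.rpow_sub_one hv0.ne', Real.rpow_sub_one hv0.ne', Real.rpow_sub_one hx.ne']
    have := Real.rpow_pos_of_pos hv0 b
    have := Real.rpow_pos_of_pos hx b
    field_simp
  · intro v hv
    have hv0 : v ≠ 0 := hv.1.ne'
    have h := (((hasDerivAt_id v).const_sub 1).div ((hasDerivAt_id v).mul_const x)
      (mul_ne_zero hv0 hx.ne'))
    refine (h.congr_deriv ?_).hasDerivWithinAt
    simp only [id]
    field_simp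
    ring
  · intro u hu v hv huv
    have hu0 := hu.1
    have hv0 := hv.1
    simp only at huv
    field_simp at huv
    linarith

lemma key_formula {a a' b : ℝ} (ha : 0 < a) (ha' : 0 < a') (hb : 0 < b) (hC : 0 ≤ Cbh a a' b)
    (f : ℝ → ENNReal) (hf : Measurable f) (hm : Measurable fun x =>
      ∫⁻ w, f (1 / (1 + x * w)) ∂(beta2 b a')) :
    ∫⁻ x, ∫⁻ w, f (1 / (1 + x * w)) ∂(beta2 b a') ∂(bhMeasure a a' b) =
    ∫⁻ v in Ioo (0:ℝ) 1, f v * (ENNReal.ofReal (Cbh a a' b) * ENNReal.ofReal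
      (v ^ (a' - 1) * (1 - v) ^ (b - 1) * F21 a' b (a' + a) v)) := by
  rw [lintegral_bh _ _ _ _ hm]
  have g1 := Real.Gamma_pos_of_pos hb
  have g2 := Real.Gamma_pos_of_pos ha'
  have g3 := Real.Gamma_pos_of_pos (show 0 < a' + b by positivity)
  have e : ∀ x ∈ Ioo (0:ℝ) 1, ENNReal.ofReal
      (Cbh a a' b * x ^ (a - 1) * (1 - x) ^ (b - 1) * F21 a b (a + a') x) *
        ∫⁻ w, f (1 / (1 + x * w)) ∂(beta2 b a') =
      ∫⁻ v in Ioo (0:ℝ) 1, ENNReal.ofReal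
      (Cbh a a' b * x ^ (a - 1) * (1 - x) ^ (b - 1) * F21 a b (a + a') x) *
      (f v * ENNReal.ofReal
      (Real.Gamma (b + a') / (Real.Gamma b * Real.Gamma a') * (1 - v) ^ (b - 1) * v ^ (a' - 1)
        * x ^ a' * (1 - v * (1 - x)) ^ (-(a' + b)))) := by
    intro x hx
    rw [inner_change hx.1 ha' hb f hf, lintegral_const_mul _ (by fun_prop)]
  rw [setLIntegral_congr_fun measurableSet_Ioo e, lintegral_lintegral_swap (by fun_prop)]
  refine setLIntegral_congr_fun measurableSet_Ioo fun v hv => ?_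
  obtain ⟨hv0, hv1⟩ := hv
  have h1v : 0 < 1 - v := by linarith
  have hK : 0 ≤ Cbh a a' b * (Real.Gamma (b + a') / (Real.Gamma b * Real.Gamma a') *
      (1 - v) ^ (b - 1) * v ^ (a' - 1)) := by
    rw [add_comm b a']
    positivity
  have e2 : ∀ x ∈ Ioo (0:ℝ) 1, ENNReal.ofReal
      (Cbh a a' b * x ^ (a - 1) * (1 - x) ^ (b - 1) * F21 a b (a + a') x) *
      (f v * ENNReal.ofReal
      (Real.Gamma (b + a') / (Real.Gamma b * Real.Gamma a') * (1 - v) ^ (b - 1) * v ^ (a' - 1)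
        * x ^ a' * (1 - v * (1 - x)) ^ (-(a' + b)))) =
      (f v * ENNReal.ofReal (Cbh a a' b * (Real.Gamma (b + a') / (Real.Gamma b * Real.Gamma a') *
      (1 - v) ^ (b - 1) * v ^ (a' - 1)))) * ENNReal.ofReal
      (x ^ (a + a' - 1) * (1 - x) ^ (b - 1) * F21 a b (a + a') x *
        (1 - v * (1 - x)) ^ (-(a' + b))) := by
    intro x hx
    obtain ⟨hx0, hx1⟩ := hx
    have h1x : 0 < 1 - x := by linarith
    have hF := F21_nonneg ha hb (add_pos ha ha') hx0
    rw [mul_left_comm, ← ENNReal.ofReal_mul (by positivity), mul_assoc (f v),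
      ← ENNReal.ofReal_mul hK]
    congr 2
    rw [show a + a' - 1 = (a - 1) + a' by ring, Real.rpow_add hx0]
    ring
  rw [setLIntegral_congr_fun measurableSet_Ioo e2, lintegral_const_mul _ (by fun_prop),
    L6 ha ha' hb hv0 hv1, mul_assoc, ← ENNReal.ofReal_mul hK, ← ENNReal.ofReal_mul hC]
  congr 2
  rw [add_comm b a', add_comm a a']
  field_simp

lemma Cbh_nonneg {a a' b : ℝ} (ha : 0 < a) (ha' : 0 < a') (hb : 0 < b) : 0 ≤ Cbh a a' b := by
  have g1 := Real.Gamma_pos_of_pos hb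
  have g2 := Real.Gamma_pos_of_pos ha
  have g3 := Real.Gamma_pos_of_pos (show 0 < a + b by positivity)
  have : 0 ≤ F32one a a b (a + b) (a + a') := by
    refine tsum_nonneg fun n => ?_
    have p1 := poch_pos (show 0 < a + b by positivity) n
    have p2 := poch_pos hb n
    have p3 := poch_pos ha n
    have p4 := poch_pos (show 0 < a + a' by positivity) n
    positivity
  unfold Cbh
  positivity

theorem bh_main_theorem {Ω : Type*} [MeasurableSpace Ω] (μ : Measure Ω)
    [IsProbabilityMeasure μ] (X W : Ω → ℝ) (hX : Measurable X) (hW : Measurable W)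
    (a a' b : ℝ) (ha : 0 < a) (ha' : 0 < a') (hb : 0 < b)
    (hInd : IndepFun X W μ)
    (hXlaw : μ.map X = bhMeasure a a' b) (hWlaw : μ.map W = beta2 b a') :
    μ.map (fun ω => 1 / (1 + X ω * W ω)) = bhMeasure a' a b := by
  have hC := Cbh_nonneg ha ha' hb
  have hC' := Cbh_nonneg ha' ha hb
  have hprod := (indepFun_iff_map_prod_eq_prod_map_map hX.aemeasurable hW.aemeasurable).1 hInd
  haveI : IsProbabilityMeasure (μ.map W) := Measure.isProbabilityMeasure_map hW.aemeasurable
  have main : ∀ f : ℝ → ENNReal, Measurable f → ∫⁻ ω, f (1 / (1 + X ω * W ω)) ∂μ =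
      ∫⁻ v in Ioo (0:ℝ) 1, f v * (ENNReal.ofReal (Cbh a a' b) * ENNReal.ofReal
      (v ^ (a' - 1) * (1 - v) ^ (b - 1) * F21 a' b (a' + a) v)) := by
    intro f hf
    have hg : Measurable fun p : ℝ × ℝ => f (1 / (1 + p.1 * p.2)) := by fun_prop
    have hm : Measurable fun x => ∫⁻ w, f (1 / (1 + x * w)) ∂(μ.map W) :=
      hg.lintegral_prod_right'
    have h1 : ∫⁻ ω, f (1 / (1 + X ω * W ω)) ∂μ =
        ∫⁻ p, f (1 / (1 + p.1 * p.2)) ∂(μ.map fun ω => (X ω, W ω)) := by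
      rw [lintegral_map hg (by fun_prop)]
    rw [h1, hprod, lintegral_prod _ hg.aemeasurable]
    rw [hWlaw] at hm ⊢
    rw [hXlaw]
    exact key_formula ha ha' hb hC f hf hm
  have h1 := main (fun _ => 1) measurable_const
  simp only [lintegral_const, measure_univ, one_mul] at h1
  rw [lintegral_const_mul _ (by fun_prop)] at h1
  have hfin : ∫⁻ v in Ioo (0:ℝ) 1, ENNReal.ofReal
      (v ^ (a' - 1) * (1 - v) ^ (b - 1) * F21 a' b (a' + a) v) ≠ ⊤ := by
    intro h
    rw [h] at h1
    by_cases h0 : ENNReal.ofReal (Cbh a a' b) = 0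
    · simp [h0] at h1
    · simp [ENNReal.mul_top h0] at h1
  have h2 := L7 ha' ha hb hfin
  have hCC : ENNReal.ofReal (Cbh a a' b) = ENNReal.ofReal (Cbh a' a b) :=
    (ENNReal.eq_inv_of_mul_eq_one_left h1.symm).trans (ENNReal.eq_inv_of_mul_eq_one_left h2).symm
  ext s hs
  have hmeas : Measurable fun ω => 1 / (1 + X ω * W ω) := by fun_prop
  rw [← lintegral_indicator_one hs, ← lintegral_indicator_one hs,
    lintegral_map (measurable_one.indicator hs) hmeas,
    main _ (measurable_one.indicator hs), lintegral_bh _ _ _ _ (measurable_one.indicator hs), hCC]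
  refine setLIntegral_congr_fun measurableSet_Ioo fun v hv => ?_
  rw [mul_comm, ← ENNReal.ofReal_mul hC']
  congr 2
  ring
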